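/- arXiv:0905.1860 — 2 statements merged into one kernel-verified Lean document; each statement's English description precedes it below -/
import Mathlib

section
/- (Molien–Weyl formula for noncommutative invariants.) Fix d ≥ 1 and let d_m = dim T^m(R_d^*)^G be the dimension of the space of SL(2,ℂ)-invariant m-linear forms on binary forms of degree d. Then for every real z with |z| < 1/(d+1), the Hilbert–Poincaré series H_d(z) = Σ_{m≥0} d_m z^m converges and equals (2/π) ∫₀^π sin²x / (1 − z·sin((d+1)x)/sin x) dx. -/
/-!
An `m`-linear form on `R_d` is `SL(2, ℂ)`-invariant iff it is killed by the raising operator `E`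
and the lowering operator `F` of `𝔰𝔩₂`: these generate the two one-parameter groups of
transvections, which generate `SL(2, ℂ)`. For any finite-dimensional action of `𝔰𝔩₂`, `E` maps the
weight space `0` onto the weight space `2`, and its kernel there consists of the vectors killed by
both `E` and `F`. Hence `d_m` is the multiplicity of the weight `0` minus that of the weight `2` in
`T^m(R_d^*)`. The `m`-th power of the character `χ(x) = sin ((d + 1) x) / sin x` of `R_d` is the
generating function of these multiplicities, and integration against `(2/π) sin²x` extracts exactly
this difference. As `|χ| ≤ d + 1`, summing over `m` is a geometric series under the integral.
-/

/-- The binary form of degree `d` with (normalized) coefficients `ξ`, evaluated at the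
vector `v ∈ ℂ²`:  `p_ξ(v) = Σ_{k=0}^{d} binom(d,k) ξ_k v₀^k v₁^{d−k}`.
The coefficient vector `ξ : Fin (d+1) → ℂ` is a faithful model of the space `R_d`
of binary forms of degree `d`. -/
noncomputable def Pval (d : ℕ) (ξ : Fin (d + 1) → ℂ) (v : Fin 2 → ℂ) : ℂ :=
  ∑ k : Fin (d + 1), (d.choose (k : ℕ) : ℂ) * ξ k * v 0 ^ (k : ℕ) * v 1 ^ (d - (k : ℕ))

/-- The space `T^m(R_d^*)^G` of `SL(2,ℂ)`-invariant `m`-linear forms on the space `R_d`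
of binary forms of degree `d` (modelled by coefficient vectors in `Fin (d+1) → ℂ`).
Invariance of `F` means `F(g·p₁, ..., g·p_m) = F(p₁, ..., p_m)` for every `g ∈ SL(2,ℂ)`,
where `(g·p)(v) = p(g⁻¹·v)`; here `g·p_{ξ i} = p_{η i}` is expressed through the
evaluations `Pval`. -/
noncomputable def invariantForms (d m : ℕ) :
    Submodule ℂ (MultilinearMap ℂ (fun _ : Fin m => (Fin (d + 1) → ℂ)) ℂ) where
  carrier := {F | ∀ g : Matrix.SpecialLinearGroup (Fin 2) ℂ,
    ∀ ξ η : Fin m → (Fin (d + 1) → ℂ),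
      (∀ i v, Pval d (η i) v = Pval d (ξ i)
          (((g⁻¹ : Matrix.SpecialLinearGroup (Fin 2) ℂ) : Matrix (Fin 2) (Fin 2) ℂ).mulVec v)) →
      F η = F ξ}
  add_mem' := by
    intro F G hF hG g ξ η h
    simp only [MultilinearMap.add_apply, hF g ξ η h, hG g ξ η h]
  zero_mem' := by intro g ξ η h; simp
  smul_mem' := by
    intro c F hF g ξ η h
    simp only [MultilinearMap.smul_apply, hF g ξ η h]

open Module (finrank)
open Module.End (eigenspace mem_eigenspace_iff)

section Sl2

variable {K V : Type*} [Field K] [AddCommGroup V] [Module K V]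

/-- Endomorphisms `H, E, F` of `V` satisfying the relations of the standard basis of `𝔰𝔩₂`.
Unlike in `IsSl2Triple`, `H` may vanish, so that trivial representations are allowed. -/
structure IsSl2Action (H E F : Module.End K V) : Prop where
  lie_e_f : ⁅E, F⁆ = H
  lie_h_e : ⁅H, E⁆ = (2 : K) • E
  lie_h_f : ⁅H, F⁆ = -((2 : K) • F)

namespace IsSl2Action

variable {H E F : Module.End K V}

theorem symm (h : IsSl2Action H E F) : IsSl2Action (-H) F E where
  lie_e_f := by rw [← h.lie_e_f, Ring.lie_def, Ring.lie_def, neg_sub]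
  lie_h_e := by rw [← neg_eq_iff_eq_neg.mpr h.lie_h_f, Ring.lie_def, Ring.lie_def]; noncomm_ring
  lie_h_f := by rw [← h.lie_h_e, Ring.lie_def, Ring.lie_def]; noncomm_ring

theorem e_mem_eigenspace (h : IsSl2Action H E F) {μ : K} {v : V} (hv : v ∈ eigenspace H μ) :
    E v ∈ eigenspace H (μ + 2) := by
  rw [mem_eigenspace_iff] at hv ⊢
  have hHE : H (E v) - E (H v) = (2 : K) • E v := congr($h.lie_h_e v)
  rw [sub_eq_iff_eq_add.mp hHE, hv, map_smul, add_smul, add_comm]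

theorem f_mem_eigenspace (h : IsSl2Action H E F) {μ : K} {v : V} (hv : v ∈ eigenspace H μ) :
    F v ∈ eigenspace H (μ - 2) := by
  rw [mem_eigenspace_iff] at hv ⊢
  have hHF : H (F v) - F (H v) = -((2 : K) • F v) := congr($h.lie_h_f v)
  rw [sub_eq_iff_eq_add.mp hHF, hv, map_smul, sub_smul, neg_add_eq_sub]

theorem pow_e_mem_eigenspace (h : IsSl2Action H E F) {μ : K} {v : V} (hv : v ∈ eigenspace H μ)
    (k : ℕ) : (E ^ k) v ∈ eigenspace H (μ + 2 * k) := by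
  induction k with
  | zero => simpa using hv
  | succ k ih =>
    rw [pow_succ', Module.End.mul_apply]
    convert h.e_mem_eigenspace ih using 2
    push_cast
    ring

theorem e_f_apply_sub (h : IsSl2Action H E F) (v : V) : E (F v) - F (E v) = H v :=
  congr($h.lie_e_f v)

theorem f_pow_succ_e_apply (h : IsSl2Action H E F) {μ : K} {v : V} (hv : v ∈ eigenspace H μ)
    (hEF : E (F v) = 0) (k : ℕ) :
    F ((E ^ (k + 1)) v) = -((k + 1) * (μ + k)) • (E ^ k) v := by
  induction k with
  | zero =>
    have hFE := h.e_f_apply_sub v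
    rw [hEF, mem_eigenspace_iff.mp hv, zero_sub, neg_eq_iff_eq_neg] at hFE
    simpa using hFE
  | succ k ih =>
    rw [pow_succ', Module.End.mul_apply, ← sub_sub_self (E _) (F _), h.e_f_apply_sub, ih, map_smul,
      ← Module.End.mul_apply E, ← pow_succ',
      mem_eigenspace_iff.mp (h.pow_e_mem_eigenspace hv (k + 1)), ← sub_smul]
    congr 1
    push_cast
    ring

variable [CharZero K] [FiniteDimensional K V]

theorem exists_pow_e_apply_eq_zero (h : IsSl2Action H E F) {μ : K} {v : V}
    (hv : v ∈ eigenspace H μ) : ∃ k, (E ^ k) v = 0 := by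
  by_contra! hne
  have hinj : Function.Injective fun k : ℕ => μ + 2 * (k : K) := fun k l hkl => by
    simpa using hkl
  have hli := Module.End.eigenvectors_linearIndependent' H _ hinj (fun k => (E ^ k) v)
    fun k => ⟨h.pow_e_mem_eigenspace hv k, hne k⟩
  exact Infinite.not_finite hli.finite

-- A nonzero `v` would generate an infinite string `v, E v, E² v, …`, as `F E^(k+1) v` is a
-- nonzero multiple of `E^k v`.
theorem eq_zero_of_e_f_apply_eq_zero (h : IsSl2Action H E F) {v : V} (hv : v ∈ eigenspace H 2)
    (hEF : E (F v) = 0) : v = 0 := by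
  by_contra hne
  obtain ⟨k, hk, hk'⟩ := Nat.exists_not_and_succ_of_not_zero_of_exists
    (p := fun k => (E ^ k) v = 0) (by simpa using hne) (h.exists_pow_e_apply_eq_zero hv)
  have hF := h.f_pow_succ_e_apply hv hEF k
  rw [hk', map_zero, eq_comm, smul_eq_zero_iff_left hk, neg_eq_zero] at hF
  norm_cast at hF
  grind

theorem f_apply_eq_zero (h : IsSl2Action H E F) {v : V} (hv : v ∈ eigenspace H 0)
    (hE : E v = 0) : F v = 0 := by
  refine h.symm.eq_zero_of_e_f_apply_eq_zero ?_ ?_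
  · simpa [mem_eigenspace_iff, neg_eq_iff_eq_neg] using h.f_mem_eigenspace hv
  · rw [mem_eigenspace_iff, zero_smul] at hv
    rw [sub_eq_zero.mp ((h.e_f_apply_sub v).trans hv), hE, map_zero, map_zero]

theorem eigenspace_zero_inf_ker (h : IsSl2Action H E F) :
    eigenspace H 0 ⊓ E.ker = E.ker ⊓ F.ker := by
  ext v
  simp only [Submodule.mem_inf, LinearMap.mem_ker]
  refine ⟨fun ⟨hv, hE⟩ => ⟨hE, h.f_apply_eq_zero hv hE⟩, fun ⟨hE, hF⟩ => ⟨?_, hE⟩⟩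
  rw [mem_eigenspace_iff, ← h.e_f_apply_sub, hE, hF, map_zero, map_zero, sub_zero, zero_smul]

theorem finrank_ker_inf_ker_add (h : IsSl2Action H E F) :
    finrank K ↥(E.ker ⊓ F.ker) + finrank K (eigenspace H 2) = finrank K (eigenspace H 0) := by
  have hE : ∀ v ∈ eigenspace H 0, E v ∈ eigenspace H 2 := fun v hv => by
    simpa using h.e_mem_eigenspace hv
  have hF : ∀ v ∈ eigenspace H 2, F v ∈ eigenspace H 0 := fun v hv => by
    simpa using h.f_mem_eigenspace hv
  have hker : (E.restrict hE).ker.map (eigenspace H 0).subtype = E.ker ⊓ F.ker := by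
    rw [LinearMap.ker_restrict, Submodule.map_comap_subtype, h.eigenspace_zero_inf_ker]
  have hinj : Function.Injective (E.restrict hE ∘ₗ F.restrict hF) :=
    LinearMap.ker_eq_bot.mp <| LinearMap.ker_eq_bot'.mpr fun v hv =>
      Subtype.ext <| h.eq_zero_of_e_f_apply_eq_zero v.2 congr(($hv : V))
  have hsurj : Function.Surjective (E.restrict hE) :=
    .of_comp (g := F.restrict hF) (LinearMap.injective_iff_surjective.mp hinj)
  rw [← hker, Submodule.finrank_map_subtype_eq, add_comm,
    ← LinearMap.finrank_range_add_finrank_ker (E.restrict hE),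
    LinearMap.range_eq_top.mpr hsurj, finrank_top]

end IsSl2Action
end Sl2

theorem finrank_eigenspace_eq_card {ι K V : Type*} [Fintype ι] [Field K] [DecidableEq K]
    [AddCommGroup V] [Module K V] (b : Module.Basis ι K V) {T : Module.End K V} {a : ι → K}
    (hT : ∀ i, T (b i) = a i • b i) (μ : K) :
    finrank K (eigenspace T μ) = Fintype.card {i // a i = μ} := by
  have hcoord (i : ι) : b.coord i ∘ₗ T = a i • b.coord i := b.ext fun j => by
    obtain rfl | hij := eq_or_ne i j <;> simp [*]
  have hrepr (v : V) (i : ι) : b.repr (T v) i = a i * b.repr v i := congr($(hcoord i) v)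
  have hspan : eigenspace T μ = Submodule.span K (Set.range fun i : {i // a i = μ} => b i) := by
    ext v
    have hrange : (Set.range fun i : {i // a i = μ} => b i) = b '' {i | a i = μ} :=
      (Set.image_eq_range b _).symm
    rw [hrange, b.mem_span_image, mem_eigenspace_iff, b.ext_elem_iff]
    refine forall_congr' fun i => ?_
    rw [hrepr, map_smul, Finsupp.smul_apply, smul_eq_mul, mul_eq_mul_right_iff, Finset.mem_coe,
      Finsupp.mem_support_iff, ← or_iff_not_imp_right]
    rfl
  rw [hspan]
  exact finrank_span_eq_card (b.linearIndependent.comp _ Subtype.val_injective)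

section Derivation

variable {R ι V W : Type*} [CommRing R] [DecidableEq ι] [AddCommGroup V] [Module R V]
  [AddCommGroup W] [Module R W]

/-- The endomorphism of the space of multilinear maps which lets `N` act on the `i`-th argument. -/
def actOnSlot (i : ι) : Module.End R V →ₗ[R] Module.End R (MultilinearMap R (fun _ : ι => V) W) :=
  (MultilinearMap.compLinearMapMultilinear (R := R) (ι := ι) (M₁ := fun _ => V)
    (M₁' := fun _ => V) (M₂ := W)).toLinearMap (fun _ => LinearMap.id) i

theorem actOnSlot_apply (i : ι) (N : Module.End R V) (F : MultilinearMap R (fun _ : ι => V) W)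
    (ξ : ι → V) : actOnSlot i N F ξ = F (Function.update ξ i (N (ξ i))) := by
  refine congrArg F (?_ : _ = _)
  funext j
  obtain rfl | hj := eq_or_ne j i <;> simp [*]

theorem actOnSlot_mul (i : ι) (A B : Module.End R V) :
    actOnSlot (W := W) i (A * B) = actOnSlot i B * actOnSlot i A := by
  ext F ξ
  simp [actOnSlot_apply]

theorem actOnSlot_commute {i j : ι} (hij : i ≠ j) (A B : Module.End R V) :
    Commute (actOnSlot (W := W) i A) (actOnSlot j B) := by
  ext F ξ
  simp [actOnSlot_apply, hij, hij.symm, Function.update_comm hij]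

variable [Fintype ι]

/-- The infinitesimal action of `N` on multilinear maps: the derivative of
`F ↦ F ∘ (g, …, g)` at `g = 1` in the direction `N`. -/
def derivation : Module.End R V →ₗ[R] Module.End R (MultilinearMap R (fun _ : ι => V) W) :=
  ∑ i, actOnSlot i

theorem derivation_apply (N : Module.End R V) (F : MultilinearMap R (fun _ : ι => V) W)
    (ξ : ι → V) : derivation N F ξ = ∑ i, F (Function.update ξ i (N (ξ i))) := by
  simp [derivation, LinearMap.sum_apply, actOnSlot_apply]

theorem lie_derivation (A B : Module.End R V) :
    ⁅derivation (ι := ι) (W := W) A, derivation (ι := ι) (W := W) B⁆ = derivation ⁅B, A⁆ := by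
  calc ⁅derivation (ι := ι) (W := W) A, derivation (ι := ι) (W := W) B⁆
      = ∑ i, ∑ j, ⁅actOnSlot (W := W) i A, actOnSlot (W := W) j B⁆ := by
        simp only [derivation, LinearMap.sum_apply, Ring.lie_def, Finset.sum_mul_sum,
          Finset.sum_sub_distrib]
        rw [Finset.sum_comm (f := fun i j => actOnSlot (W := W) i B * actOnSlot j A)]
    _ = ∑ i, ⁅actOnSlot (W := W) i A, actOnSlot (W := W) i B⁆ :=
        Finset.sum_congr rfl fun i _ => Fintype.sum_eq_single i fun j hj =>
          (actOnSlot_commute hj.symm A B).lie_eq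
    _ = derivation ⁅B, A⁆ := by
        simp only [Ring.lie_def, ← actOnSlot_mul, ← map_sub, derivation, LinearMap.sum_apply]

end Derivation

section DerivationEigenspace

variable {K ι κ V W : Type*} [Field K] [Fintype ι] [DecidableEq ι] [AddCommGroup V] [Module K V]
  [AddCommGroup W] [Module K W]

theorem derivation_isSl2Action {h e f : Module.End K V} (hV : IsSl2Action h e f) :
    IsSl2Action (derivation (ι := ι) (W := W) h) (derivation f) (derivation e) where
  lie_e_f := by rw [lie_derivation, hV.lie_e_f]
  lie_h_e := by
    rw [lie_derivation, ← map_smul, ← neg_eq_iff_eq_neg.mpr hV.lie_h_f, Ring.lie_def, Ring.lie_def,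
      neg_sub]
  lie_h_f := by
    rw [lie_derivation, ← map_smul, ← hV.lie_h_e, ← map_neg, Ring.lie_def, Ring.lie_def, neg_sub]

theorem finrank_eigenspace_derivation [Fintype κ] [DecidableEq K] (b : Module.Basis κ K V)
    {N : Module.End K V} {a : κ → K} (hN : ∀ k, N (b k) = a k • b k) (μ : K) :
    finrank K (eigenspace (derivation (ι := ι) (W := K) N) μ) =
      Fintype.card {w : ι → κ // ∑ i, a (w i) = μ} := by
  classical
  rw [finrank_eigenspace_eq_card (a := fun w : (ι → κ) × Unit => ∑ i, a (w.1 i))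
    (Basis.multilinearMap (fun _ : ι => b) (Module.Basis.singleton Unit K)) ?_ μ]
  · exact Fintype.card_congr (Equiv.subtypeEquiv (Equiv.prodUnique _ _) fun w => Iff.rfl)
  rintro ⟨w, u⟩
  refine Module.Basis.ext_multilinear (fun _ => b) fun v => ?_
  calc derivation N (Basis.multilinearMap (fun _ => b) (Module.Basis.singleton Unit K) (w, u))
        (fun i => b (v i))
      = (∑ i, a (v i)) * Basis.multilinearMap (fun _ => b) (Module.Basis.singleton Unit K) (w, u)
        (fun i => b (v i)) := by
        simp only [derivation_apply, hN, MultilinearMap.map_update_smul, Function.update_eq_self,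
          smul_eq_mul, Finset.sum_mul]
    _ = (∑ i, a (w i)) * Basis.multilinearMap (fun _ => b) (Module.Basis.singleton Unit K) (w, u)
        (fun i => b (v i)) := by
        by_cases hvw : v = w
        · rw [hvw]
        · obtain ⟨i, hi⟩ := Function.ne_iff.mp hvw
          have hzero : ∏ i, b.repr (b (v i)) (w i) = 0 :=
            Finset.prod_eq_zero (Finset.mem_univ i) (by simp [hi])
          simp only [Basis.multilinearMap_apply_apply, hzero, zero_smul, mul_zero]

end DerivationEigenspace

theorem continuous_multilinearMap_of_finiteDimensional {𝕜 ι G : Type*} {E : ι → Type*}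
    [NontriviallyNormedField 𝕜] [CompleteSpace 𝕜] [Finite ι] [∀ i, NormedAddCommGroup (E i)]
    [∀ i, NormedSpace 𝕜 (E i)] [∀ i, FiniteDimensional 𝕜 (E i)] [NormedAddCommGroup G]
    [NormedSpace 𝕜 G] (F : MultilinearMap 𝕜 E G) : Continuous F := by
  classical
  have := Fintype.ofFinite ι
  let b (i : ι) := Module.finBasis 𝕜 (E i)
  have hF : ⇑F = fun ξ : ∀ i, E i => ∑ w : ∀ i, Fin (finrank 𝕜 (E i)),
      (∏ i, (b i).coord (w i) (ξ i)) • F fun i => b i (w i) := by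
    ext ξ
    conv_lhs => rw [← funext fun i => (b i).sum_repr (ξ i), F.map_sum]
    simp only [F.map_smul_univ, Module.Basis.coord_apply]
  rw [hF]
  exact continuous_finsetSum _ fun w _ => .smul (continuous_finsetProd _ fun i _ =>
    (LinearMap.continuous_of_finiteDimensional _).comp (continuous_apply i)) continuous_const

section Flow

variable {𝕜 E G : Type*} [RCLike 𝕜] [NormedAddCommGroup E] [NormedSpace 𝕜 E]
  [NormedAddCommGroup G] [NormedSpace 𝕜 G]

theorem hasDerivAt_exp_smul_apply [CompleteSpace E] (N : E →L[𝕜] E) (x : E) (t : 𝕜) :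
    HasDerivAt (fun s : 𝕜 => NormedSpace.exp (s • N) x) (N (NormedSpace.exp (t • N) x)) t := by
  simpa using (hasDerivAt_exp_smul_const' N t).clm_apply (hasDerivAt_const t x)

theorem eq_comp_exp_of_hasDerivAt [CompleteSpace E] {N : E →L[𝕜] E} {ℓ : 𝕜 → E →L[𝕜] G}
    (hℓ : ∀ t, HasDerivAt ℓ (ℓ t ∘L N) t) (t : 𝕜) : ℓ t = ℓ 0 ∘L NormedSpace.exp (t • N) := by
  have hφ (s : 𝕜) : HasDerivAt (fun s => ℓ (t - s) ∘L NormedSpace.exp (s • N)) 0 s := by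
    have h := ((hℓ (t - s)).comp_const_sub t s).clm_comp (hasDerivAt_exp_smul_const' N s)
    refine h.congr_deriv ?_
    ext x
    simp
  simpa [ContinuousLinearMap.one_def] using
    is_const_of_deriv_eq_zero (fun s => (hφ s).differentiableAt) (fun s => (hφ s).deriv) 0 t

variable {ι : Type*} [Fintype ι] [DecidableEq ι] [FiniteDimensional 𝕜 E]

theorem hasDerivAt_multilinearMap_exp (F : MultilinearMap 𝕜 (fun _ : ι => E) G) (N : E →L[𝕜] E)
    (ξ : ι → E) (t : 𝕜) :
    HasDerivAt (fun s : 𝕜 => F fun i => NormedSpace.exp (s • N) (ξ i))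
      (derivation (N : Module.End 𝕜 E) F fun i => NormedSpace.exp (t • N) (ξ i)) t := by
  have := FiniteDimensional.complete 𝕜 E
  let Fc : ContinuousMultilinearMap 𝕜 (fun _ : ι => E) G :=
    ⟨F, continuous_multilinearMap_of_finiteDimensional F⟩
  refine (HasFDerivAt.multilinear_comp (f := Fc) fun i =>
    (hasDerivAt_exp_smul_apply N (ξ i) t).hasFDerivAt).hasDerivAt.congr_deriv ?_
  simp only [derivation_apply, sum_apply, ContinuousLinearMap.comp_apply,
    ContinuousLinearMap.toSpanSingleton_apply, one_smul,
    ContinuousMultilinearMap.toContinuousLinearMap_apply]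
  rfl

theorem derivation_eq_zero_iff_exp_invariant (F : MultilinearMap 𝕜 (fun _ : ι => E) G)
    (N : E →L[𝕜] E) :
    derivation (N : Module.End 𝕜 E) F = 0 ↔
      ∀ (t : 𝕜) ξ, F (fun i => NormedSpace.exp (t • N) (ξ i)) = F ξ := by
  refine ⟨fun hN t ξ => ?_, fun hF => MultilinearMap.ext fun ξ => ?_⟩
  · have hderiv (s : 𝕜) : HasDerivAt (fun s => F fun i => NormedSpace.exp (s • N) (ξ i)) 0 s := by
      simpa [hN] using hasDerivAt_multilinearMap_exp F N ξ s
    simpa using is_const_of_deriv_eq_zero (fun s => (hderiv s).differentiableAt)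
      (fun s => (hderiv s).deriv) t 0
  · have h := hasDerivAt_multilinearMap_exp F N ξ 0
    simp only [hF] at h
    simpa using h.unique (hasDerivAt_const _ _)

end Flow

section BinaryForms

open Matrix (SpecialLinearGroup)
open scoped Matrix

variable {d m : ℕ}

theorem Pval_injective {ξ η : Fin (d + 1) → ℂ} (h : ∀ v, Pval d ξ v = Pval d η v) : ξ = η := by
  have hpoly : ∑ k : Fin (d + 1), Polynomial.monomial (k : ℕ) (d.choose k * ξ k) =
      ∑ k : Fin (d + 1), Polynomial.monomial (k : ℕ) (d.choose k * η k) := by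
    refine Polynomial.funext fun x => ?_
    simpa [Pval, Polynomial.eval_finsetSum] using h ![x, 1]
  funext k
  have hchoose : (d.choose k : ℂ) ≠ 0 := Nat.cast_ne_zero.mpr (Nat.choose_pos k.is_le).ne'
  simpa [Polynomial.finsetSum_coeff, Polynomial.coeff_monomial, Fin.val_inj, hchoose] using
    congr(Polynomial.coeff $hpoly k)

/-- Evaluation of binary forms at `v`, as a functional of the coefficient vector. -/
noncomputable def evalForm (d : ℕ) (v : Fin 2 → ℂ) : (Fin (d + 1) → ℂ) →L[ℂ] ℂ :=
  ∑ k : Fin (d + 1), (d.choose k * v 0 ^ (k : ℕ) * v 1 ^ (d - k)) • ContinuousLinearMap.proj k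

theorem evalForm_apply (v : Fin 2 → ℂ) (ξ : Fin (d + 1) → ℂ) : evalForm d v ξ = Pval d ξ v := by
  simp only [evalForm, Pval, sum_apply, smul_apply, ContinuousLinearMap.proj_apply,
    smul_eq_mul, mul_right_comm _ (ξ _)]

/-- The derivation `v₁ ∂/∂v₀` on coefficient vectors. The cyclic index `k + 1` is harmless, as its
coefficient vanishes where it wraps around. -/
noncomputable def raising (d : ℕ) : (Fin (d + 1) → ℂ) →L[ℂ] (Fin (d + 1) → ℂ) :=
  .pi fun k => (d - k : ℂ) • .proj (k + 1)

/-- The derivation `v₀ ∂/∂v₁` on coefficient vectors, with the same cyclic indexing as in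
`raising`. -/
noncomputable def lowering (d : ℕ) : (Fin (d + 1) → ℂ) →L[ℂ] (Fin (d + 1) → ℂ) :=
  .pi fun k => (k : ℂ) • .proj (k - 1)

/-- The derivation `v₁ ∂/∂v₁ - v₀ ∂/∂v₀` on coefficient vectors. -/
noncomputable def weightOperator (d : ℕ) : (Fin (d + 1) → ℂ) →L[ℂ] (Fin (d + 1) → ℂ) :=
  .pi fun k => (d - 2 * k : ℂ) • .proj k

theorem raising_apply (ξ : Fin (d + 1) → ℂ) (k : Fin (d + 1)) :
    raising d ξ k = (d - k) * ξ (k + 1) := rfl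

theorem lowering_apply (ξ : Fin (d + 1) → ℂ) (k : Fin (d + 1)) :
    lowering d ξ k = k * ξ (k - 1) := rfl

theorem weightOperator_apply (ξ : Fin (d + 1) → ℂ) (k : Fin (d + 1)) :
    weightOperator d ξ k = (d - 2 * k) * ξ k := rfl

theorem sub_mul_val_add_one (k : Fin (d + 1)) :
    (d - k : ℂ) * ((k + 1 : Fin (d + 1)) : ℕ) = (d - k) * (k + 1) := by
  obtain rfl | hk := eq_or_ne k (Fin.last d)
  · simp
  · rw [Fin.val_add_one_of_lt (Fin.lt_last_iff_ne_last.mpr hk), Nat.cast_add_one]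

theorem val_mul_val_sub_one (k : Fin (d + 1)) :
    (k : ℂ) * ((k - 1 : Fin (d + 1)) : ℕ) = k * (k - 1) := by
  obtain rfl | hk := eq_or_ne k 0
  · simp
  · rw [Fin.val_sub_one_of_ne_zero hk, Nat.cast_pred (Fin.pos_iff_ne_zero.mpr hk)]

theorem choose_mul_val_add_one (k : Fin (d + 1)) (X : ℕ → ℂ) :
    d.choose (k + 1 : Fin (d + 1)) * ((k + 1 : Fin (d + 1)) : ℕ) * X (k + 1 : Fin (d + 1)) =
      d.choose k * (d - k) * X (k + 1) := by
  obtain rfl | hk := eq_or_ne k (Fin.last d)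
  · simp
  · rw [Fin.val_add_one_of_lt (Fin.lt_last_iff_ne_last.mpr hk), ← Nat.cast_sub k.is_le]
    exact_mod_cast congr(($(Nat.choose_succ_right_eq d k) : ℂ) * X (k + 1))

theorem isSl2Action_weightOperator (d : ℕ) :
    IsSl2Action (weightOperator d : Module.End ℂ (Fin (d + 1) → ℂ)) (raising d) (lowering d) where
  lie_e_f := LinearMap.ext fun ξ => funext fun k => by
    simp only [Ring.lie_def, LinearMap.sub_apply, Module.End.mul_apply, ContinuousLinearMap.coe_coe,
      Pi.sub_apply, raising_apply, lowering_apply, weightOperator_apply, add_sub_cancel_right,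
      sub_add_cancel]
    linear_combination ξ k * (sub_mul_val_add_one k + val_mul_val_sub_one k)
  lie_h_e := LinearMap.ext fun ξ => funext fun k => by
    simp only [Ring.lie_def, LinearMap.sub_apply, Module.End.mul_apply, ContinuousLinearMap.coe_coe,
      LinearMap.smul_apply, Pi.sub_apply, Pi.smul_apply, smul_eq_mul, raising_apply,
      weightOperator_apply]
    linear_combination 2 * ξ (k + 1) * sub_mul_val_add_one k
  lie_h_f := LinearMap.ext fun ξ => funext fun k => by
    simp only [Ring.lie_def, LinearMap.sub_apply, Module.End.mul_apply, ContinuousLinearMap.coe_coe,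
      LinearMap.neg_apply, LinearMap.smul_apply, Pi.sub_apply, Pi.neg_apply, Pi.smul_apply,
      smul_eq_mul, lowering_apply, weightOperator_apply]
    linear_combination 2 * ξ (k - 1) * val_mul_val_sub_one k

/-- `N` is the action on coefficient vectors of the nilpotent substitution `v ↦ n v`: it is the
velocity of `v ↦ v + s n v`. -/
def IsInfinitesimalSubstitution (N : (Fin (d + 1) → ℂ) →L[ℂ] (Fin (d + 1) → ℂ))
    (n : Matrix (Fin 2) (Fin 2) ℂ) : Prop :=
  ∀ v (t : ℂ), HasDerivAt (fun s : ℂ => evalForm d (v + s • n *ᵥ v))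
    (evalForm d (v + t • n *ᵥ v) ∘L N) t

theorem isInfinitesimalSubstitution_raising (d : ℕ) :
    IsInfinitesimalSubstitution (raising d) (Matrix.single 0 1 1) := by
  intro v t
  have hw : HasDerivAt (fun s : ℂ => v 0 + s * v 1) (v 1) t := by
    simpa using ((hasDerivAt_id t).mul_const (v 1)).const_add (v 0)
  have hterm (k : Fin (d + 1)) := (((hw.fun_pow k).const_mul (d.choose k : ℂ)).mul_const
    (v 1 ^ (d - k : ℕ))).smul_const (ContinuousLinearMap.proj (R := ℂ) (φ := fun _ => ℂ) k)
  simp only [evalForm, Pi.add_apply, Pi.smul_apply, Matrix.single_mulVec, smul_eq_mul, one_mul,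
    Function.update_self, ne_eq, one_ne_zero, not_false_eq_true, Function.update_of_ne,
    Pi.zero_apply, mul_zero, add_zero]
  refine (HasDerivAt.fun_sum fun k _ => hterm k).congr_deriv ?_
  rw [← Equiv.sum_comp (Equiv.addRight 1)]
  ext ξ
  simp only [sum_apply, smul_apply, ContinuousLinearMap.comp_apply, ContinuousLinearMap.proj_apply,
    smul_eq_mul, raising_apply, Equiv.coe_addRight]
  refine Finset.sum_congr rfl fun k _ => ?_
  have hpow : (d - k : ℂ) * (v 1 * v 1 ^ (d - (k + 1) : ℕ)) = (d - k) * v 1 ^ (d - k : ℕ) := by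
    obtain hk | hk := k.is_le.eq_or_lt
    · simp [hk]
    · rw [← pow_succ', ← Nat.sub_sub, Nat.sub_add_cancel (Nat.sub_pos_of_lt hk)]
  have hchoose := choose_mul_val_add_one k fun n =>
    (v 0 + t * v 1) ^ (n - 1) * (v 1 * v 1 ^ (d - n))
  simp only [Nat.add_sub_cancel] at hchoose
  linear_combination d.choose k * (v 0 + t * v 1) ^ (k : ℕ) * ξ (k + 1) * hpow +
    ξ (k + 1) * hchoose

theorem isInfinitesimalSubstitution_lowering (d : ℕ) :
    IsInfinitesimalSubstitution (lowering d) (Matrix.single 1 0 1) := by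
  intro v t
  have hw : HasDerivAt (fun s : ℂ => v 1 + s * v 0) (v 0) t := by
    simpa using ((hasDerivAt_id t).mul_const (v 0)).const_add (v 1)
  have hterm (k : Fin (d + 1)) := ((hw.fun_pow (d - k)).const_mul
    (d.choose k * v 0 ^ (k : ℕ))).smul_const
      (ContinuousLinearMap.proj (R := ℂ) (φ := fun _ => ℂ) k)
  simp only [evalForm, Pi.add_apply, Pi.smul_apply, Matrix.single_mulVec, smul_eq_mul, one_mul,
    Function.update_self, ne_eq, zero_ne_one, not_false_eq_true, Function.update_of_ne,
    Pi.zero_apply, mul_zero, add_zero]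
  refine (HasDerivAt.fun_sum fun k _ => hterm k).congr_deriv ?_
  ext ξ
  simp only [sum_apply, smul_apply, ContinuousLinearMap.comp_apply, ContinuousLinearMap.proj_apply,
    smul_eq_mul, lowering_apply]
  refine .trans (Finset.sum_congr rfl fun k _ => ?_) (Equiv.sum_comp (Equiv.addRight 1)
    fun k : Fin (d + 1) => (d.choose k * v 0 ^ (k : ℕ) * (v 1 + t * v 0) ^ (d - k : ℕ) *
      (k * ξ (k - 1)) : ℂ))
  rw [Equiv.coe_addRight, add_sub_cancel_right, Nat.cast_sub k.is_le, Nat.sub_sub]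
  linear_combination -ξ k * choose_mul_val_add_one k fun n => v 0 ^ n * (v 1 + t * v 0) ^ (d - n)

theorem Pval_exp_smul {N : (Fin (d + 1) → ℂ) →L[ℂ] (Fin (d + 1) → ℂ)}
    {n : Matrix (Fin 2) (Fin 2) ℂ} (hN : IsInfinitesimalSubstitution N n) (t : ℂ)
    (ξ : Fin (d + 1) → ℂ) (v : Fin 2 → ℂ) :
    Pval d (NormedSpace.exp (t • N) ξ) v = Pval d ξ ((1 + t • n) *ᵥ v) := by
  have h := congr($(eq_comp_exp_of_hasDerivAt (hN v) t) ξ)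
  rw [zero_smul, add_zero, ContinuousLinearMap.comp_apply, evalForm_apply, evalForm_apply] at h
  rw [← h, Matrix.add_mulVec, Matrix.one_mulVec, Matrix.smul_mulVec]

/-- `F` is invariant under the substitution `v ↦ A v` in its arguments. The map `T` is this
substitution on coefficient vectors; it is unique by `Pval_injective`. -/
def IsInvariantUnder (F : MultilinearMap ℂ (fun _ : Fin m => (Fin (d + 1) → ℂ)) ℂ)
    (A : Matrix (Fin 2) (Fin 2) ℂ) : Prop :=
  ∃ T : (Fin (d + 1) → ℂ) → (Fin (d + 1) → ℂ),
    (∀ ξ v, Pval d (T ξ) v = Pval d ξ (A *ᵥ v)) ∧ ∀ ξ, F (fun i => T (ξ i)) = F ξ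

variable {F : MultilinearMap ℂ (fun _ : Fin m => (Fin (d + 1) → ℂ)) ℂ}

theorem IsInvariantUnder.mul {A B : Matrix (Fin 2) (Fin 2) ℂ} (hA : IsInvariantUnder F A)
    (hB : IsInvariantUnder F B) : IsInvariantUnder F (A * B) := by
  obtain ⟨S, hS, hFS⟩ := hA
  obtain ⟨T, hT, hFT⟩ := hB
  exact ⟨T ∘ S, fun ξ v => by rw [Function.comp_apply, hT, hS, Matrix.mulVec_mulVec],
    fun ξ => (hFT fun i => S (ξ i)).trans (hFS ξ)⟩

theorem mem_invariantForms_of_transvection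
    (hF : ∀ (i j : Fin 2) (t : ℂ), i ≠ j → IsInvariantUnder F (1 + Matrix.single i j t)) :
    F ∈ invariantForms d m := by
  have hF' (g : SpecialLinearGroup (Fin 2) ℂ) : IsInvariantUnder F g := by
    induction g using Matrix.SL2.transvection_induction with
    | htransvec i j hij t => exact SpecialLinearGroup.transvection_coe hij t ▸ hF i j t hij
    | hmul A B hA hB => exact Matrix.SpecialLinearGroup.coe_mul A B ▸ hA.mul hB
  intro g ξ η hη
  obtain ⟨T, hT, hFT⟩ := hF' g⁻¹
  rw [← hFT ξ, funext fun i => Pval_injective fun v => (hη i v).trans (hT (ξ i) v).symm]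

theorem isInvariantUnder_one_add_smul {N : (Fin (d + 1) → ℂ) →L[ℂ] (Fin (d + 1) → ℂ)}
    {n : Matrix (Fin 2) (Fin 2) ℂ} (hN : IsInfinitesimalSubstitution N n)
    (hF : derivation (N : Module.End ℂ (Fin (d + 1) → ℂ)) F = 0) (t : ℂ) :
    IsInvariantUnder F (1 + t • n) :=
  ⟨⇑(NormedSpace.exp (t • N)), Pval_exp_smul hN t,
    (derivation_eq_zero_iff_exp_invariant F N).mp hF t⟩

theorem derivation_eq_zero_of_mem_invariantForms (hF : F ∈ invariantForms d m)
    {N : (Fin (d + 1) → ℂ) →L[ℂ] (Fin (d + 1) → ℂ)} {i j : Fin 2} (hij : i ≠ j)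
    (hN : IsInfinitesimalSubstitution N (Matrix.single i j 1)) :
    derivation (N : Module.End ℂ (Fin (d + 1) → ℂ)) F = 0 :=
  (derivation_eq_zero_iff_exp_invariant F N).mpr fun t ξ =>
    hF (SpecialLinearGroup.transvection hij t)⁻¹ ξ _ fun k v => by
      rw [inv_inv, Pval_exp_smul hN, SpecialLinearGroup.transvection_coe, Matrix.smul_single,
        smul_eq_mul, mul_one]

theorem mem_invariantForms_iff : F ∈ invariantForms d m ↔
    derivation (raising d : Module.End ℂ (Fin (d + 1) → ℂ)) F = 0 ∧
      derivation (lowering d : Module.End ℂ (Fin (d + 1) → ℂ)) F = 0 := by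
  have hraise := isInfinitesimalSubstitution_raising d
  have hlower := isInfinitesimalSubstitution_lowering d
  refine ⟨fun hF => ⟨derivation_eq_zero_of_mem_invariantForms hF zero_ne_one hraise,
    derivation_eq_zero_of_mem_invariantForms hF one_ne_zero hlower⟩, fun ⟨hE, hF⟩ =>
    mem_invariantForms_of_transvection fun i j t hij => ?_⟩
  rw [← mul_one t, ← smul_eq_mul, ← Matrix.smul_single]
  obtain ⟨rfl, rfl⟩ | ⟨rfl, rfl⟩ : i = 0 ∧ j = 1 ∨ i = 1 ∧ j = 0 := by lia
  · exact isInvariantUnder_one_add_smul hraise hE t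
  · exact isInvariantUnder_one_add_smul hlower hF t

theorem invariantForms_eq_ker_inf_ker (d m : ℕ) : invariantForms d m =
    (derivation (W := ℂ) (raising d : Module.End ℂ (Fin (d + 1) → ℂ))).ker ⊓
      (derivation (lowering d : Module.End ℂ (Fin (d + 1) → ℂ))).ker :=
  Submodule.ext fun _ => mem_invariantForms_iff

/-- The weight of the monomial multilinear form `ξ ↦ ∏ i, ξ i (w i)`. -/
def weight (w : Fin m → Fin (d + 1)) : ℤ := ∑ i, (d - 2 * (w i : ℤ))

theorem weightOperator_basisFun (k : Fin (d + 1)) :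
    weightOperator d (Pi.basisFun ℂ _ k) = (d - 2 * k : ℂ) • Pi.basisFun ℂ _ k := by
  ext j
  obtain rfl | hjk := eq_or_ne j k <;> simp [weightOperator_apply, *]

theorem finrank_eigenspace_derivation_weightOperator (n : ℤ) :
    finrank ℂ (eigenspace (derivation (ι := Fin m) (W := ℂ)
      (weightOperator d : Module.End ℂ (Fin (d + 1) → ℂ))) n) =
      Fintype.card {w : Fin m → Fin (d + 1) // weight w = n} := by
  rw [finrank_eigenspace_derivation (Pi.basisFun ℂ (Fin (d + 1))) weightOperator_basisFun]
  refine Fintype.card_congr (Equiv.subtypeEquivRight fun w => ?_)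
  rw [weight, ← Int.cast_inj (α := ℂ)]
  push_cast
  rfl

theorem finrank_invariantForms_add_card_weight (d m : ℕ) :
    finrank ℂ (invariantForms d m) + Fintype.card {w : Fin m → Fin (d + 1) // weight w = 2} =
      Fintype.card {w : Fin m → Fin (d + 1) // weight w = 0} := by
  have h := derivation_isSl2Action (ι := Fin m) (W := ℂ) (isSl2Action_weightOperator d)
  have h0 := finrank_eigenspace_derivation_weightOperator (d := d) (m := m) 0
  have h2 := finrank_eigenspace_derivation_weightOperator (d := d) (m := m) 2
  rw [Int.cast_zero] at h0
  rw [Int.cast_ofNat] at h2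
  rw [invariantForms_eq_ker_inf_ker, inf_comm, ← h0, ← h2, h.finrank_ker_inf_ker_add]

theorem card_weight_neg (n : ℤ) :
    Fintype.card {w : Fin m → Fin (d + 1) // weight w = -n} =
      Fintype.card {w : Fin m → Fin (d + 1) // weight w = n} := by
  have hrev (w : Fin m → Fin (d + 1)) : weight (fun i => (w i).rev) = -weight w := by
    simp only [weight, ← Finset.sum_neg_distrib]
    refine Finset.sum_congr rfl fun i _ => ?_
    rw [Fin.val_rev]
    grind
  refine Fintype.card_congr (Equiv.subtypeEquiv (Equiv.arrowCongr (.refl _) Fin.revPerm)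
    fun w => ?_)
  rw [← neg_inj, neg_neg, ← hrev]
  rfl

end BinaryForms

section Character

open Real

theorem sum_cos_pow {κ : Type*} [Fintype κ] {θ : κ → ℝ} (hθ : ∑ k, sin (θ k) = 0) (m : ℕ) :
    (∑ k, cos (θ k)) ^ m = ∑ w : Fin m → κ, cos (∑ i, θ (w i)) := by
  have hexp : ((∑ k, cos (θ k) : ℝ) : ℂ) = ∑ k, Complex.exp (θ k * Complex.I) := by
    simp only [Complex.exp_mul_I, Finset.sum_add_distrib, ← Finset.sum_mul, ← Complex.ofReal_cos,
      ← Complex.ofReal_sin, ← Complex.ofReal_sum, hθ, Complex.ofReal_zero, zero_mul, add_zero]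
  calc (∑ k, cos (θ k)) ^ m = ((((∑ k, cos (θ k) : ℝ) : ℂ)) ^ m).re := by
        rw [← Complex.ofReal_pow, Complex.ofReal_re]
    _ = ∑ w : Fin m → κ, (Complex.exp ((∑ i, θ (w i) : ℝ) * Complex.I)).re := by
        simp only [hexp, Fintype.sum_pow, ← Complex.exp_sum, ← Finset.sum_mul,
          ← Complex.ofReal_sum, Complex.re_sum]
    _ = ∑ w : Fin m → κ, cos (∑ i, θ (w i)) := by simp only [Complex.exp_ofReal_mul_I_re]

/-- The character of `R_d` at the diagonal matrix `diag (e^{ix}, e^{-ix})`, which extends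
`sin ((d + 1) x) / sin x` continuously. -/
noncomputable def character (d : ℕ) (x : ℝ) : ℝ :=
  ∑ k : Fin (d + 1), cos ((d - 2 * k) * x)

theorem continuous_character (d : ℕ) : Continuous (character d) := by
  unfold character
  fun_prop

theorem abs_character_le (d : ℕ) (x : ℝ) : |character d x| ≤ d + 1 :=
  calc |character d x| ≤ ∑ k : Fin (d + 1), |cos ((d - 2 * k) * x)| :=
        Finset.abs_sum_le_sum_abs _ _
    _ ≤ ∑ _k : Fin (d + 1), 1 := Finset.sum_le_sum fun k _ => abs_cos_le_one _
    _ = d + 1 := by simp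

theorem character_mul_sin (d : ℕ) (x : ℝ) : character d x * sin x = sin ((d + 1) * x) := by
  let S (k : ℕ) : ℝ := -sin ((d + 1 - 2 * k) * x) / 2
  have hterm (k : ℕ) : cos ((d - 2 * k) * x) * sin x = S (k + 1) - S k := by
    have hadd : (d + 1 - 2 * k) * x = (d - 2 * k) * x + x := by ring
    have hsub : (d + 1 - 2 * (k + 1 : ℕ)) * x = (d - 2 * k) * x - x := by push_cast; ring
    simp only [S]
    rw [hadd, hsub, sin_add, sin_sub]
    ring
  have hlast : (d + 1 - 2 * (d + 1 : ℕ)) * x = -((d + 1) * x) := by push_cast; ring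
  calc character d x * sin x = ∑ k ∈ Finset.range (d + 1), (S (k + 1) - S k) := by
        simp only [character, Finset.sum_mul, hterm]
        exact Fin.sum_univ_eq_sum_range (fun k => S (k + 1) - S k) (d + 1)
    _ = S (d + 1) - S 0 := Finset.sum_range_sub S _
    _ = sin ((d + 1) * x) := by
        simp only [S, hlast, sin_neg, Nat.cast_zero, mul_zero, sub_zero]
        ring

theorem sum_sin_eq_zero (d : ℕ) (x : ℝ) : ∑ k : Fin (d + 1), sin ((d - 2 * k) * x) = 0 := by
  refine self_eq_neg.mp ?_
  rw [← Finset.sum_neg_distrib, ← Equiv.sum_comp Fin.revPerm]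
  refine Finset.sum_congr rfl fun k _ => ?_
  rw [← sin_neg, Fin.revPerm_apply, Fin.val_rev, Nat.add_sub_add_right, Nat.cast_sub k.is_le]
  ring_nf

theorem character_pow (d m : ℕ) (x : ℝ) :
    character d x ^ m = ∑ w : Fin m → Fin (d + 1), cos (weight w * x) := by
  rw [character, sum_cos_pow (sum_sin_eq_zero d x)]
  simp only [weight, ← Finset.sum_mul]
  push_cast
  rfl

theorem integral_cos_int_mul (n : ℤ) : ∫ x in 0..π, cos (n * x) = if n = 0 then π else 0 := by
  obtain rfl | hn := eq_or_ne n 0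
  · simp
  · rw [if_neg hn, intervalIntegral.integral_comp_mul_left _ (Int.cast_ne_zero.mpr hn)]
    simp [sin_int_mul_pi]

theorem integral_sin_sq_mul_cos_int_mul (n : ℤ) :
    ∫ x in 0..π, sin x ^ 2 * cos (n * x) =
      π / 2 * ((if n = 0 then 1 else 0) -
        ((if n = 2 then 1 else 0) + (if n = -2 then 1 else 0)) / 2) := by
  have hprod (x : ℝ) : sin x ^ 2 * cos (n * x) = 1 / 2 * cos (n * x) -
      (1 / 4 * cos ((n - 2 : ℤ) * x) + 1 / 4 * cos ((n + 2 : ℤ) * x)) := by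
    have hsub : ((n - 2 : ℤ) : ℝ) * x = n * x - 2 * x := by push_cast; ring
    have hadd : ((n + 2 : ℤ) : ℝ) * x = n * x + 2 * x := by push_cast; ring
    rw [hsub, hadd, cos_add, cos_sub, sin_sq_eq_half_sub]
    ring
  have hint (c : ℝ) (k : ℤ) : IntervalIntegrable (fun x : ℝ => c * cos (k * x))
      MeasureTheory.volume 0 π := Continuous.intervalIntegrable (by fun_prop) _ _
  simp only [hprod]
  rw [intervalIntegral.integral_sub (hint _ _) ((hint _ _).add (hint _ _)),
    intervalIntegral.integral_add (hint _ _) (hint _ _)]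
  simp only [intervalIntegral.integral_const_mul, integral_cos_int_mul, sub_eq_zero,
    add_eq_zero_iff_eq_neg]
  split_ifs <;> ring

theorem finrank_invariantForms_eq_integral (d m : ℕ) : (finrank ℂ (invariantForms d m) : ℝ) =
    2 / π * ∫ x in 0..π, sin x ^ 2 * character d x ^ m := by
  have hcard (n : ℤ) : (∑ w : Fin m → Fin (d + 1), if weight w = n then (1 : ℝ) else 0) =
      Fintype.card {w : Fin m → Fin (d + 1) // weight w = n} := by
    rw [Finset.sum_boole, Fintype.card_subtype]
  simp only [character_pow, Finset.mul_sum]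
  rw [intervalIntegral.integral_finsetSum fun w _ =>
    Continuous.intervalIntegrable (by fun_prop) _ _]
  simp only [integral_sin_sq_mul_cos_int_mul]
  rw [← Finset.mul_sum, Finset.sum_sub_distrib, ← Finset.sum_div, Finset.sum_add_distrib, hcard,
    hcard, hcard, card_weight_neg, ← finrank_invariantForms_add_card_weight]
  push_cast
  field_simp
  ring

open MeasureTheory in
theorem hasSum_intervalIntegral_mul_pow {μ : Measure ℝ} {a b r : ℝ} {g q : ℝ → ℝ}
    (hg : IntervalIntegrable g μ a b) (hq : AEStronglyMeasurable q (μ.restrict (Set.uIoc a b)))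
    (hr : r < 1) (hqr : ∀ x ∈ Set.uIoc a b, |q x| ≤ r) :
    HasSum (fun m : ℕ => ∫ x in a..b, g x * q x ^ m ∂μ) (∫ x in a..b, g x / (1 - q x) ∂μ) := by
  refine intervalIntegral.hasSum_integral_of_dominated_convergence (fun m x => |g x| * r ^ m)
    (fun m => hg.aestronglyMeasurable_restrict_uIoc.mul (hq.pow m))
    (fun m => .of_forall fun x hx => ?_) (.of_forall fun x hx => ?_) ?_ (.of_forall fun x hx => ?_)
  · rw [norm_eq_abs, abs_mul, abs_pow]
    gcongr
    exact hqr x hx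
  · exact (summable_geometric_of_lt_one ((abs_nonneg _).trans (hqr x hx)) hr).mul_left _
  · simp only [tsum_mul_left]
    exact hg.abs.mul_const _
  · rw [div_eq_mul_inv]
    exact (hasSum_geometric_of_abs_lt_one ((hqr x hx).trans_lt hr)).mul_left _

end Character

/-- **Molien–Weyl formula for noncommutative invariants.**
With `d_m = dim T^m(R_d^*)^G` the dimension of the space of `SL(2,ℂ)`-invariant
`m`-linear forms on binary forms of degree `d`, for every real `z` with `|z| < 1/(d+1)`
the Hilbert–Poincaré series `H_d(z) = Σ_m d_m z^m` converges and equals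
`(2/π) ∫₀^π sin²x / (1 − z·sin((d+1)x)/sin x) dx`. -/
theorem hilbert_series_eq_integral (d : ℕ) (hd : 1 ≤ d) (z : ℝ)
    (hz : |z| < 1 / ((d : ℝ) + 1)) :
    HasSum (fun m : ℕ => (Module.finrank ℂ (invariantForms d m) : ℝ) * z ^ m)
      ((2 / Real.pi) * ∫ x in (0:ℝ)..Real.pi,
        Real.sin x ^ 2 / (1 - z * (Real.sin (((d : ℝ) + 1) * x) / Real.sin x))) := by
  -- Where `sin x = 0`, the junk value of the quotient is harmless: the numerator vanishes.
  have hcharacter (x : ℝ) : Real.sin x ^ 2 /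
      (1 - z * (Real.sin ((d + 1) * x) / Real.sin x)) =
      Real.sin x ^ 2 / (1 - z * character d x) := by
    obtain hx | hx := eq_or_ne (Real.sin x) 0
    · simp [hx]
    · rw [← character_mul_sin, mul_div_cancel_right₀ _ hx]
  have hmoment (m : ℕ) : (finrank ℂ (invariantForms d m) : ℝ) * z ^ m =
      2 / Real.pi * ∫ x in (0 : ℝ)..Real.pi, Real.sin x ^ 2 * (z * character d x) ^ m := by
    rw [finrank_invariantForms_eq_integral, mul_assoc, ← intervalIntegral.integral_mul_const]
    simp only [mul_pow, mul_assoc, mul_comm (z ^ m)]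
  have hbound (x : ℝ) : |z * character d x| ≤ |z| * (d + 1) := by
    rw [abs_mul]
    exact mul_le_mul_of_nonneg_left (abs_character_le d x) (abs_nonneg z)
  simp only [hcharacter, hmoment]
  refine (hasSum_intervalIntegral_mul_pow (Continuous.intervalIntegrable (by fun_prop) _ _)
    ((continuous_character d).const_mul z).aestronglyMeasurable ?_ fun x _ => hbound x).mul_left _
  rwa [← lt_div_iff₀ (by positivity)]
end

section
/- For every m ≥ 0 and d ≥ 1, the number of m-partite noncrossing pair partitions of {1, ..., md} (with respect to the consecutive intervals of length d) equals (2/π) ∫₀^π (sin((d+1)x)/sin x)^m · sin²x dx. -/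
/-!
A noncrossing pair partition is encoded by a Dyck path, whose height over each gap is the number of
blocks straddling that gap; the blocks are recovered by matching the steps that face each other
horizontally. A peak of the path is a block of two neighbours, and every block has a peak below its
arc, so the partition is `m`-partite exactly when all peaks are at multiples of `d`. On each
interval of length `d` such a path goes down `k` times and then up `d - k` times, so the number
`N m a` of such paths from height `a` to `0` satisfies
`N (m + 1) a = ∑ k ≤ min a d, N m (a + d - 2k)`.
The Chebyshev polynomials of the second kind multiply by the same rule,
`U d * U a = ∑ k ≤ min a d, U (a + d - 2k)`. Hence `N m a = L (U d ^ m * U a)` for the linear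
functional `L` with `L (U 0) = 1` and `L (U n) = 0` for `n > 0`, which is integration against the
semicircle distribution; substituting `t = cos x` turns `L (U d ^ m)` into the integral.
-/

/-- `i` and `j` lie in the same block of the partition `π`. -/
def SameBlock {n : ℕ} (π : Finpartition (Finset.univ : Finset (Fin n))) (i j : Fin n) : Prop :=
  ∃ B ∈ π.parts, i ∈ B ∧ j ∈ B

/-- A partition of `{1, ..., n}` is noncrossing if there are no
`i < i' < j < j'` with `i ~ j`, `i' ~ j'` and `i ≁ i'`. -/
def IsNoncrossing {n : ℕ} (π : Finpartition (Finset.univ : Finset (Fin n))) : Prop :=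
  ∀ i i' j j' : Fin n, i < i' → i' < j → j < j' →
    SameBlock π i j → SameBlock π i' j' → SameBlock π i i'

/-- A pair partition: every block has exactly two elements. -/
def IsPairPartition {n : ℕ} (π : Finpartition (Finset.univ : Finset (Fin n))) : Prop :=
  ∀ B ∈ π.parts, B.card = 2

/-- An `m`-partite partition (with respect to the consecutive intervals of length `d`):
every block contains at most one element from each interval
`{kd+1, ..., (k+1)d}` (0-indexed: the elements `i` with `i / d = k`). -/
def IsMPartite {n : ℕ} (d : ℕ) (π : Finpartition (Finset.univ : Finset (Fin n))) : Prop :=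
  ∀ B ∈ π.parts, ∀ k : ℕ, (B.filter (fun i : Fin n => (i : ℕ) / d = k)).card ≤ 1

open Finset

/-! ### Lattice paths -/

/-- A peak of the path with height function `H`. The truncated subtraction makes the condition
false at `x = 0`. -/
def IsPeak (H : ℕ → ℕ) (x : ℕ) : Prop := H (x - 1) < H x ∧ H (x + 1) < H x

/-- `H` is the height function of a lattice path of `n` up or down steps from height `a` to
height `0` that never goes below height `0`. It vanishes beyond `n`, so that different height
functions belong to different paths; step `i` leads from `H i` to `H (i + 1)`. -/
structure IsLatticePath (n a : ℕ) (H : ℕ → ℕ) : Prop where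
  start : H 0 = a
  eq_zero : ∀ x, n ≤ x → H x = 0
  step : ∀ x < n, H (x + 1) = H x + 1 ∨ H x = H (x + 1) + 1

/-- The height of the lower end of step `i` of the path with height function `H`. -/
def stepLevel (H : ℕ → ℕ) (i : ℕ) : ℕ := min (H i) (H (i + 1))

/-- The steps `i` and `j` of the path with height function `H` see each other horizontally: they
have the same level, and the path stays above it between them. In a path from `0` to `0` this
matches every up step with the down step that closes it. -/
def Facing (H : ℕ → ℕ) (i j : ℕ) : Prop :=
  stepLevel H i = stepLevel H j ∧ ∀ x ∈ Set.uIoc i j, stepLevel H i < H x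

namespace Facing

variable {H : ℕ → ℕ} {i j k : ℕ}

lemma refl (H : ℕ → ℕ) (i : ℕ) : Facing H i i := ⟨rfl, by simp⟩

lemma symm (h : Facing H i j) : Facing H j i :=
  ⟨h.1.symm, fun x hx => h.1 ▸ h.2 x (Set.uIoc_comm i j ▸ hx)⟩

lemma trans (h : Facing H i j) (h' : Facing H j k) : Facing H i k := by
  refine ⟨h.1.trans h'.1, fun x hx => ?_⟩
  by_cases hxij : x ∈ Set.uIoc i j
  · exact h.2 x hxij
  · refine h.1 ▸ h'.2 x ?_
    simp only [Set.mem_uIoc] at *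
    omega

lemma stepLevel_lt (h : Facing H i k) (hij : i < j) (hjk : j < k) :
    stepLevel H i < stepLevel H j :=
  lt_min (h.2 j (by simp only [Set.mem_uIoc]; omega))
    (h.2 (j + 1) (by simp only [Set.mem_uIoc]; omega))

lemma unique (hj : Facing H i j) (hk : Facing H i k) (hij : i ≠ j) (hik : i ≠ k) : j = k := by
  have le_of_lt : ∀ {a b c}, Facing H a b → Facing H a c → a < b → c ≤ b := fun hab hac h =>
    not_lt.1 fun h' => (hac.stepLevel_lt h h').ne hab.1
  have hjk := hj.symm.trans hk
  have := le_of_lt hj hk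
  have := le_of_lt hk hj
  have := le_of_lt hj.symm hjk
  have := le_of_lt hjk hj.symm
  have := le_of_lt hk.symm hjk.symm
  have := le_of_lt hjk.symm hk.symm
  omega

lemma noncrossing {i' j' : ℕ} (h : Facing H i j) (h' : Facing H i' j') (hi : i < i')
    (hij : i' < j) : ¬ j < j' := fun hj =>
  (h.stepLevel_lt hi hij).not_gt (h.1 ▸ h'.stepLevel_lt hij hj)

end Facing

namespace IsLatticePath

variable {n a : ℕ} {H : ℕ → ℕ} {i j x : ℕ}

lemma exists_facing_gt (hH : IsLatticePath n a H) (hup : H i < H (i + 1)) :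
    ∃ j, i < j ∧ j < n ∧ Facing H i j := by
  classical
  have hreturn : ∃ x, i < x ∧ H x ≤ H i :=
    ⟨max n (i + 1), by omega, by rw [hH.eq_zero _ (le_max_left _ _)]; exact Nat.zero_le _⟩
  have hin : i < n := by
    by_contra hi
    have := hH.eq_zero (i + 1) (by omega)
    omega
  obtain ⟨hix, hx⟩ := Nat.find_spec hreturn
  have habove : ∀ y, i < y → y < Nat.find hreturn → H i < H y := fun y hiy hy => by
    have := Nat.find_min hreturn hy
    omega
  have hxn : Nat.find hreturn ≤ n := Nat.find_min' hreturn ⟨hin, by simp [hH.eq_zero]⟩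
  generalize Nat.find hreturn = x at *
  obtain ⟨j, rfl⟩ : ∃ j, x = j + 1 := ⟨x - 1, by omega⟩
  have hij : i ≠ j := by rintro rfl; omega
  have hj := habove j (by omega) (by omega)
  have hstep := hH.step j (by omega)
  refine ⟨j, by omega, by omega, by simp only [stepLevel]; omega, fun y hy => ?_⟩
  rw [Set.uIoc_of_le (by omega), Set.mem_Ioc] at hy
  have := habove y hy.1 (by omega)
  simp only [stepLevel]
  omega

lemma exists_facing_lt (hH : IsLatticePath n 0 H) (hdown : H (j + 1) < H j) :
    ∃ i < j, Facing H i j := by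
  have hjn : j < n := by
    by_contra hj
    have := hH.eq_zero j (by omega)
    omega
  have hlow : H 0 ≤ H (j + 1) := by rw [hH.start]; exact Nat.zero_le _
  obtain ⟨i, hi⟩ : ∃ i, i = Nat.findGreatest (fun i => H i ≤ H (j + 1)) j := ⟨_, rfl⟩
  have hle : H i ≤ H (j + 1) := hi ▸ Nat.findGreatest_spec
    (P := fun i => H i ≤ H (j + 1)) (Nat.zero_le j) hlow
  have hij : i ≤ j := hi ▸ Nat.findGreatest_le j
  have habove : ∀ y, i < y → y ≤ j → H (j + 1) < H y := fun y hiy hy =>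
    not_le.1 (Nat.findGreatest_is_greatest (P := fun i => H i ≤ H (j + 1)) (hi ▸ hiy) hy)
  have hne : i ≠ j := by rintro rfl; omega
  have hi' := habove (i + 1) (by omega) (by omega)
  have hstep := hH.step i (by omega)
  refine ⟨i, by omega, by simp only [stepLevel]; omega, fun y hy => ?_⟩
  rw [Set.uIoc_of_le hij, Set.mem_Ioc] at hy
  have := habove y hy.1 hy.2
  simp only [stepLevel]
  omega

lemma exists_facing (hH : IsLatticePath n 0 H) (hi : i < n) : ∃ j < n, j ≠ i ∧ Facing H i j := by
  rcases hH.step i hi with hup | hdown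
  · obtain ⟨j, hij, hj, h⟩ := hH.exists_facing_gt (i := i) (by omega)
    exact ⟨j, hj, hij.ne', h⟩
  · obtain ⟨j, hji, h⟩ := hH.exists_facing_lt (j := i) (by omega)
    exact ⟨j, hji.trans hi, hji.ne, h.symm⟩

lemma up_of_facing (hH : IsLatticePath n a H) (h : Facing H i j) (hij : i < j) (hj : j < n) :
    H (i + 1) = H i + 1 := by
  have := h.2 (i + 1) (by simp only [Set.mem_uIoc]; omega)
  have := hH.step i (by omega)
  simp only [stepLevel] at *
  omega

lemma down_of_facing (hH : IsLatticePath n a H) (h : Facing H i j) (hij : i < j) (hj : j < n) :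
    H j = H (j + 1) + 1 := by
  have := h.2 j (by simp only [Set.mem_uIoc]; omega)
  have := hH.step j hj
  have := h.1
  simp only [stepLevel] at *
  omega

lemma facing_of_isPeak (hH : IsLatticePath n a H) (hx : IsPeak H x) :
    0 < x ∧ x < n ∧ Facing H (x - 1) x := by
  obtain ⟨hup, hdown⟩ := hx
  have hpos : 0 < x := by
    by_contra h
    obtain rfl : x = 0 := by omega
    exact hup.false
  have hxn : x < n := by
    by_contra h
    have := hH.eq_zero x (by omega)
    omega
  obtain ⟨y, rfl⟩ : ∃ y, x = y + 1 := ⟨x - 1, by omega⟩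
  have := hH.step y (by omega)
  have := hH.step (y + 1) hxn
  simp only [add_tsub_cancel_right] at *
  refine ⟨hpos, hxn, by simp only [stepLevel]; omega, fun z hz => ?_⟩
  rw [Set.uIoc_of_le (by omega), Set.mem_Ioc] at hz
  obtain rfl : z = y + 1 := by omega
  simp only [stepLevel]
  omega

lemma exists_isPeak_of_facing (hH : IsLatticePath n a H) (h : Facing H i j) (hij : i < j)
    (hj : j < n) : ∃ x, i < x ∧ x ≤ j ∧ IsPeak H x := by
  classical
  have hup := hH.up_of_facing h hij hj
  have hdown : ∃ x, i < x ∧ H (x + 1) < H x :=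
    ⟨j, hij, by have := hH.down_of_facing h hij hj; omega⟩
  have hxj : Nat.find hdown ≤ j :=
    Nat.find_min' hdown ⟨hij, by have := hH.down_of_facing h hij hj; omega⟩
  obtain ⟨hix, hx⟩ := Nat.find_spec hdown
  refine ⟨_, hix, hxj, ?_, hx⟩
  rcases eq_or_ne (Nat.find hdown) (i + 1) with heq | hne
  · rw [heq, add_tsub_cancel_right]
    omega
  · have hmin := Nat.find_min hdown (m := Nat.find hdown - 1) (by omega)
    have hstep := hH.step (Nat.find hdown - 1) (by omega)
    rw [Nat.sub_add_cancel (by omega)] at hmin hstep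
    omega

end IsLatticePath

/-! ### Noncrossing pair partitions as Dyck paths -/

section Blocks

variable {n d : ℕ} {π π' : Finpartition (univ : Finset (Fin n))} {i j k : Fin n}

lemma sameBlock_iff_mem_part : SameBlock π i j ↔ i ∈ π.part j := π.mem_part_iff_exists.symm

lemma sameBlock_iff_part_eq : SameBlock π i j ↔ π.part i = π.part j :=
  sameBlock_iff_mem_part.trans (π.mem_part_iff_part_eq_part (mem_univ i) (mem_univ j))

lemma SameBlock.symm (h : SameBlock π i j) : SameBlock π j i :=
  sameBlock_iff_part_eq.2 (sameBlock_iff_part_eq.1 h).symm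

lemma SameBlock.trans (h : SameBlock π i j) (h' : SameBlock π j k) : SameBlock π i k :=
  sameBlock_iff_part_eq.2 ((sameBlock_iff_part_eq.1 h).trans (sameBlock_iff_part_eq.1 h'))

lemma finpartition_ext_sameBlock (h : ∀ i j, SameBlock π i j ↔ SameBlock π' i j) : π = π' := by
  have hpart : π.part = π'.part := by
    ext j i
    rw [← sameBlock_iff_mem_part, ← sameBlock_iff_mem_part, h]
  have hparts : ∀ ρ : Finpartition (univ : Finset (Fin n)), ρ.parts = univ.image ρ.part := by
    intro ρ
    ext B
    refine ⟨fun hB => ?_, fun hB => ?_⟩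
    · obtain ⟨i, hi, rfl⟩ := ρ.part_surjOn hB
      exact mem_image_of_mem _ hi
    · obtain ⟨i, hi, rfl⟩ := mem_image.1 hB
      exact ρ.part_mem.2 hi
  exact Finpartition.ext (by rw [hparts, hparts, hpart])

lemma isMPartite_iff_sameBlock :
    IsMPartite d π ↔ ∀ i j, SameBlock π i j → (i : ℕ) / d = j / d → i = j := by
  simp only [IsMPartite, card_le_one, mem_filter]
  constructor
  · rintro h i j ⟨B, hB, hi, hj⟩ hij
    exact h B hB (j / d) i ⟨hi, hij⟩ j ⟨hj, rfl⟩
  · rintro h B hB k i ⟨hi, hik⟩ j ⟨hj, hjk⟩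
    exact h i j ⟨B, hB, hi, hj⟩ (hik.trans hjk.symm)

namespace IsPairPartition

lemma part_eq_pair (hπ : IsPairPartition π) (h : SameBlock π i j) (hij : i ≠ j) :
    π.part i = {i, j} := by
  refine (eq_of_subset_of_card_le ?_ ?_).symm
  · rw [insert_subset_iff, singleton_subset_iff, ← sameBlock_iff_mem_part,
      ← sameBlock_iff_mem_part]
    exact ⟨h.trans h.symm, h.symm⟩
  · rw [hπ _ (π.part_mem.2 (mem_univ i)), card_pair hij]

lemma exists_partner (hπ : IsPairPartition π) (i : Fin n) : ∃ j ≠ i, SameBlock π i j := by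
  have hcard := hπ _ (π.part_mem.2 (mem_univ i))
  obtain ⟨j, hj, hji⟩ := exists_mem_ne (hcard ▸ one_lt_two) i
  exact ⟨j, hji, (sameBlock_iff_mem_part.2 hj).symm⟩

lemma unique (hπ : IsPairPartition π) (hj : SameBlock π i j) (hk : SameBlock π i k) (hij : i ≠ j)
    (hik : i ≠ k) : j = k := by
  have hmem := sameBlock_iff_mem_part.1 hk.symm
  rw [hπ.part_eq_pair hj hij, mem_insert, mem_singleton] at hmem
  exact (hmem.resolve_left hik.symm).symm

end IsPairPartition

/-- The blocks of `π` that straddle the gap before the point `x`. -/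
def straddling (π : Finpartition (univ : Finset (Fin n))) (x : ℕ) : Finset (Finset (Fin n)) :=
  π.parts.filter fun B => (∃ a ∈ B, (a : ℕ) < x) ∧ ∃ b ∈ B, x ≤ (b : ℕ)

/-- The number of blocks of `π` that straddle the gap before the point `x`, which is the number of
arcs over this gap if `π` is a pair partition. -/
def height (π : Finpartition (univ : Finset (Fin n))) (x : ℕ) : ℕ := #(straddling π x)

lemma height_zero : height π 0 = 0 := by
  simp [height, straddling]

lemma height_of_le {x : ℕ} (hx : n ≤ x) : height π x = 0 := by
  simp only [height, straddling, card_eq_zero, filter_eq_empty_iff, not_and, not_exists]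
  omega

lemma straddling_succ_erase_part :
    (straddling π (i + 1)).erase (π.part i) = (straddling π i).erase (π.part i) := by
  ext C
  simp only [mem_erase, straddling, mem_filter]
  refine and_congr_right fun hC => and_congr_right fun hCπ => ?_
  have hne : ∀ a ∈ C, (a : ℕ) ≠ i := fun a ha hai =>
    hC (Fin.ext hai ▸ π.part_eq_of_mem hCπ ha).symm
  refine and_congr (exists_congr fun a => and_congr_right fun ha => ?_)
    (exists_congr fun b => and_congr_right fun hb => ?_)
  · have := hne a ha
    omega
  · have := hne b hb
    omega

namespace IsPairPartition

lemma part_mem_straddling_iff (hπ : IsPairPartition π) (h : SameBlock π i j) (hij : i < j)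
    {x : ℕ} : π.part i ∈ straddling π x ↔ i < x ∧ x ≤ j := by
  have hpart := hπ.part_eq_pair h hij.ne
  have hmem : ({i, j} : Finset (Fin n)) ∈ π.parts := hpart ▸ π.part_mem.2 (mem_univ i)
  simp only [hpart, straddling, mem_filter, hmem, true_and, mem_insert, mem_singleton,
    exists_eq_or_imp, exists_eq_left]
  omega

lemma height_succ (hπ : IsPairPartition π) (h : SameBlock π i j) (hij : i < j) :
    height π (i + 1) = height π i + 1 := by
  have hmem : π.part i ∈ straddling π (i + 1) := by
    rw [hπ.part_mem_straddling_iff h hij]; omega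
  have hnotMem : π.part i ∉ straddling π i := by
    rw [hπ.part_mem_straddling_iff h hij]; omega
  rw [height, height, ← card_erase_add_one hmem, straddling_succ_erase_part,
    erase_eq_of_notMem hnotMem]

lemma height_eq_height_succ_add_one (hπ : IsPairPartition π) (h : SameBlock π i j) (hij : i < j) :
    height π j = height π (j + 1) + 1 := by
  have hpart := sameBlock_iff_part_eq.1 h
  have hmem : π.part j ∈ straddling π j := by
    rw [← hpart, hπ.part_mem_straddling_iff h hij]; omega
  have hnotMem : π.part j ∉ straddling π (j + 1) := by
    rw [← hpart, hπ.part_mem_straddling_iff h hij]; omega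
  rw [height, height, ← card_erase_add_one hmem, ← straddling_succ_erase_part,
    erase_eq_of_notMem hnotMem]

lemma isLatticePath_height (hπ : IsPairPartition π) : IsLatticePath n 0 (height π) where
  start := height_zero
  eq_zero _ := height_of_le
  step x hx := by
    obtain ⟨j, hne, h⟩ := hπ.exists_partner ⟨x, hx⟩
    rcases hne.lt_or_gt with hlt | hlt
    · exact Or.inr (hπ.height_eq_height_succ_add_one h.symm hlt)
    · exact Or.inl (hπ.height_succ h hlt)

end IsPairPartition

namespace IsNoncrossing

variable {a b : Fin n}

lemma lt_of_lt_of_le (hnc : IsNoncrossing π) (hπ : IsPairPartition π) (h : SameBlock π i j)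
    (hij : i < j) (hab : SameBlock π a b) (hai : a < i) (hib : i ≤ b) : j < b := by
  have hne : ¬ SameBlock π a i := fun hai' =>
    (hai.trans hij).ne (hπ.unique hai'.symm h hai.ne' hij.ne)
  by_contra hbj
  rcases hib.eq_or_lt with rfl | hib
  · exact hne hab
  rcases (not_lt.1 hbj).eq_or_lt with rfl | hbj
  · exact hne (hab.trans h.symm)
  · exact hne (hnc a i b j hai hib hbj hab h)

lemma lt_of_le_of_lt (hnc : IsNoncrossing π) (hπ : IsPairPartition π) (h : SameBlock π i j)
    (hij : i < j) (hab : SameBlock π a b) (haj : a ≤ j) (hjb : j < b) : a < i := by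
  have hne : ¬ SameBlock π i a := fun hia =>
    hjb.ne (hπ.unique h (hia.trans hab) hij.ne (hij.trans hjb).ne)
  by_contra hai
  rcases (not_lt.1 hai).eq_or_lt with rfl | hia
  · exact hne (hab.trans hab.symm)
  rcases haj.eq_or_lt with rfl | haj
  · exact hne h
  · exact hne (hnc i a j b hia haj hjb h hab)

lemma straddling_subset_left (hnc : IsNoncrossing π) (hπ : IsPairPartition π)
    (h : SameBlock π i j) (hij : i < j) {x : ℕ} (hix : i ≤ x) (hxj : x ≤ j + 1) :
    straddling π i ⊆ straddling π x := by
  refine monotone_filter_right _ fun B hB ⟨⟨a, ha, hai⟩, b, hb, hib⟩ => ?_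
  have := hnc.lt_of_lt_of_le hπ h hij ⟨B, hB, ha, hb⟩ hai hib
  exact ⟨⟨a, ha, by omega⟩, b, hb, by omega⟩

lemma straddling_subset_right (hnc : IsNoncrossing π) (hπ : IsPairPartition π)
    (h : SameBlock π i j) (hij : i < j) {x : ℕ} (hix : i ≤ x) (hxj : x ≤ j + 1) :
    straddling π (j + 1) ⊆ straddling π x := by
  refine monotone_filter_right _ fun B hB ⟨⟨a, ha, haj⟩, b, hb, hjb⟩ => ?_
  have := hnc.lt_of_le_of_lt hπ h hij ⟨B, hB, ha, hb⟩ (by omega) (by omega)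
  exact ⟨⟨a, ha, by omega⟩, b, hb, by omega⟩

lemma facing_of_lt (hnc : IsNoncrossing π) (hπ : IsPairPartition π) (h : SameBlock π i j)
    (hij : i < j) : Facing (height π) i j := by
  have hup := hπ.height_succ h hij
  have hdown := hπ.height_eq_height_succ_add_one h hij
  have hends : straddling π i = straddling π (j + 1) :=
    (hnc.straddling_subset_left hπ h hij (by omega) le_rfl).antisymm
      (hnc.straddling_subset_right hπ h hij le_rfl (by omega))
  have hlevel : stepLevel (height π) i = height π i := by simp [stepLevel, hup]
  refine ⟨?_, fun x hx => ?_⟩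
  · rw [hlevel, stepLevel, hdown, height, hends, height]
    omega
  rw [Set.uIoc_of_le (by omega), Set.mem_Ioc] at hx
  rw [hlevel]
  have hsub := hnc.straddling_subset_left hπ h hij hx.1.le (by omega)
  have hmem : π.part i ∈ straddling π x := by
    rw [hπ.part_mem_straddling_iff h hij]; omega
  have hnotMem : π.part i ∉ straddling π i := by
    rw [hπ.part_mem_straddling_iff h hij]; omega
  exact card_lt_card ((ssubset_iff_of_subset hsub).2 ⟨_, hmem, hnotMem⟩)

lemma facing_iff_sameBlock (hnc : IsNoncrossing π) (hπ : IsPairPartition π) :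
    Facing (height π) i j ↔ SameBlock π i j := by
  have facing : ∀ {i j}, SameBlock π i j → Facing (height π) i j := fun {i j} h => by
    rcases lt_trichotomy i j with hij | rfl | hij
    · exact hnc.facing_of_lt hπ h hij
    · exact Facing.refl _ _
    · exact (hnc.facing_of_lt hπ h.symm hij).symm
  refine ⟨fun h => ?_, facing⟩
  obtain ⟨k, hki, hk⟩ := hπ.exists_partner i
  rcases eq_or_ne i j with rfl | hij
  · exact hk.trans hk.symm
  · have : (k : ℕ) = j := (facing hk).unique h (Fin.val_ne_iff.2 hki.symm) (Fin.val_ne_iff.2 hij)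
    exact Fin.ext this ▸ hk

lemma isMPartite_iff (hnc : IsNoncrossing π) (hπ : IsPairPartition π) :
    IsMPartite d π ↔ ∀ x, IsPeak (height π) x → d ∣ x := by
  have hH := hπ.isLatticePath_height
  rw [isMPartite_iff_sameBlock]
  constructor
  · intro hpartite x hx
    obtain ⟨hpos, hxn, hface⟩ := hH.facing_of_isPeak hx
    by_contra hdx
    obtain ⟨y, rfl⟩ : ∃ y, x = y + 1 := ⟨x - 1, by omega⟩
    have := hpartite ⟨y, by omega⟩ ⟨y + 1, hxn⟩ ((hnc.facing_iff_sameBlock hπ).1 hface)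
      (by simp [Nat.succ_div_of_not_dvd hdx])
    simp at this
  · intro hpeak
    have not_lt : ∀ {i j : Fin n}, SameBlock π i j → (i : ℕ) / d = j / d → ¬ i < j := by
      intro i j h hdiv hij
      obtain ⟨x, hix, hxj, hx⟩ :=
        hH.exists_isPeak_of_facing ((hnc.facing_iff_sameBlock hπ).2 h) hij j.2
      obtain ⟨q, rfl⟩ := hpeak x hx
      have := Nat.div_lt_of_lt_mul hix
      have := (Nat.le_div_iff_mul_le (Nat.pos_of_ne_zero fun h => by simp [h] at hix)).2
        (mul_comm d q ▸ hxj)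
      omega
    intro i j h hdiv
    exact le_antisymm (le_of_not_gt (not_lt h.symm hdiv.symm)) (le_of_not_gt (not_lt h hdiv))

end IsNoncrossing

end Blocks

/-- The relation `Facing H` on the first `n` steps. -/
def facingSetoid (n : ℕ) (H : ℕ → ℕ) : Setoid (Fin n) where
  r i j := Facing H i j
  iseqv := ⟨fun _ => Facing.refl H _, Facing.symm, Facing.trans⟩

open Classical in
/-- The partition of the first `n` steps of the path with height function `H` into classes of
steps facing each other, which inverts `height`. -/
noncomputable def facingPartition (n : ℕ) (H : ℕ → ℕ) : Finpartition (univ : Finset (Fin n)) :=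
  Finpartition.ofSetoid (facingSetoid n H)

section FacingPartition

variable {n : ℕ} {H : ℕ → ℕ} {i j : Fin n}

lemma sameBlock_facingPartition : SameBlock (facingPartition n H) i j ↔ Facing H i j := by
  classical
  exact sameBlock_iff_mem_part.trans
    (Finpartition.mem_part_ofSetoid_iff_rel.trans ⟨Facing.symm, Facing.symm⟩)

lemma isNoncrossing_facingPartition : IsNoncrossing (facingPartition n H) := by
  intro i i' j j' hi hij hj h h'
  rw [sameBlock_facingPartition] at h h'
  exact absurd hj (h.noncrossing h' hi hij)

namespace IsLatticePath

lemma isPairPartition_facingPartition (hH : IsLatticePath n 0 H) :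
    IsPairPartition (facingPartition n H) := by
  intro B hB
  obtain ⟨i, -, rfl⟩ := (facingPartition n H).part_surjOn hB
  obtain ⟨j, hj, hji, hface⟩ := hH.exists_facing i.2
  refine card_eq_two.2 ⟨i, ⟨j, hj⟩, fun h => hji (Fin.ext_iff.1 h).symm, ?_⟩
  ext k
  rw [← sameBlock_iff_mem_part, sameBlock_facingPartition, mem_insert, mem_singleton]
  constructor
  · intro hk
    refine or_iff_not_imp_left.2 fun hki => Fin.ext ?_
    exact hk.symm.unique hface (Fin.val_ne_iff.2 (Ne.symm hki)) hji.symm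
  · rintro (rfl | rfl)
    · exact Facing.refl H _
    · exact hface.symm

lemma height_facingPartition (hH : IsLatticePath n 0 H) : height (facingPartition n H) = H := by
  have hπ := hH.isPairPartition_facingPartition
  funext x
  induction x with
  | zero => rw [height_zero, hH.start]
  | succ x ih =>
    rcases lt_or_ge x n with hx | hx
    · obtain ⟨j, hne, h⟩ := hπ.exists_partner ⟨x, hx⟩
      have hface := sameBlock_facingPartition.1 h
      rcases hne.lt_or_gt with hlt | hlt
      · have := hπ.height_eq_height_succ_add_one h.symm hlt
        have := hH.down_of_facing hface.symm hlt hx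
        simp only at *
        omega
      · have := hπ.height_succ h hlt
        have := hH.up_of_facing hface hlt j.2
        simp only at *
        omega
    · rw [height_of_le (by omega), hH.eq_zero _ (by omega)]

end IsLatticePath

theorem bijOn_height (n : ℕ) :
    Set.BijOn height
      {π : Finpartition (univ : Finset (Fin n)) | IsNoncrossing π ∧ IsPairPartition π}
      {H | IsLatticePath n 0 H} := by
  refine ⟨fun π hπ => hπ.2.isLatticePath_height, fun π hπ π' hπ' h => ?_, fun H hH => ?_⟩
  · refine finpartition_ext_sameBlock fun i j => ?_
    rw [← hπ.1.facing_iff_sameBlock hπ.2, h, hπ'.1.facing_iff_sameBlock hπ'.2]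
  · exact ⟨facingPartition n H, ⟨isNoncrossing_facingPartition,
      hH.isPairPartition_facingPartition⟩, hH.height_facingPartition⟩

end FacingPartition

/-- The height functions of lattice paths with `m * d` steps from height `a` to height `0` all of
whose peaks are at multiples of `d`. -/
def multiplePeakPaths (d m a : ℕ) : Set (ℕ → ℕ) :=
  {H | IsLatticePath (m * d) a H ∧ ∀ x, IsPeak H x → d ∣ x}

theorem card_partitions_eq_card_multiplePeakPaths (m d : ℕ) :
    Nat.card {π : Finpartition (univ : Finset (Fin (m * d))) //
      IsNoncrossing π ∧ IsPairPartition π ∧ IsMPartite d π} =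
    Nat.card (multiplePeakPaths d m 0) := by
  have hbij := (bijOn_height (m * d)).subset_right
    (r := multiplePeakPaths d m 0) fun H hH => hH.1
  rw [← Nat.card_congr (hbij.equiv height)]
  refine Nat.card_congr (Equiv.subtypeEquivRight fun π => ?_)
  rw [← and_assoc]
  refine and_congr_right fun hπ => (hπ.1.isMPartite_iff hπ.2).trans ?_
  exact (and_iff_right hπ.2.isLatticePath_height).symm

/-! ### Counting paths by their first valley -/

section Valleys

variable {d m a k x : ℕ} {H : ℕ → ℕ}

/-- The height function that starts at height `a`, goes down `k` times and up `d - k` times, and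
then continues with `H`. -/
def prependValley (d a k : ℕ) (H : ℕ → ℕ) (x : ℕ) : ℕ :=
  if x < d then a + x - 2 * min x k else H (x - d)

lemma prependValley_add (d a k : ℕ) (H : ℕ → ℕ) (x : ℕ) :
    prependValley d a k H (x + d) = H x := by
  simp [prependValley]

lemma prependValley_add_two_mul_min (hka : k ≤ a) (hkd : k ≤ d) (hH : H 0 = a + d - 2 * k)
    (hx : x ≤ d) : prependValley d a k H x + 2 * min x k = a + x := by
  unfold prependValley
  split_ifs with hxd
  · omega
  · obtain rfl : x = d := by omega
    rw [Nat.sub_self]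
    omega

lemma prependValley_mem (hka : k ≤ a) (hkd : k ≤ d)
    (hH : H ∈ multiplePeakPaths d m (a + d - 2 * k)) :
    prependValley d a k H ∈ multiplePeakPaths d (m + 1) a := by
  obtain ⟨hpath, hpeak⟩ := hH
  have hvalley : ∀ x ≤ d, prependValley d a k H x + 2 * min x k = a + x := fun x =>
    prependValley_add_two_mul_min hka hkd hpath.start
  have hshift := prependValley_add d a k H
  generalize prependValley d a k H = G at *
  refine ⟨⟨by simpa using hvalley 0 (Nat.zero_le d), fun x hx => ?_, fun x hx => ?_⟩,
    fun x hx => ?_⟩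
  · rw [add_one_mul] at hx
    obtain ⟨y, rfl⟩ := Nat.exists_eq_add_of_le' (le_of_add_le_right hx)
    rw [hshift, hpath.eq_zero y (by omega)]
  · rw [add_one_mul] at hx
    rcases lt_or_ge x d with hxd | hxd
    · have := hvalley x hxd.le
      have := hvalley (x + 1) hxd
      omega
    · obtain ⟨y, rfl⟩ := Nat.exists_eq_add_of_le' hxd
      rw [add_right_comm, hshift, hshift]
      exact hpath.step y (by omega)
  · obtain ⟨hup, hdown⟩ := hx
    rcases lt_trichotomy x d with hxd | rfl | hxd
    · have := hvalley (x - 1) (by omega)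
      have := hvalley x hxd.le
      have := hvalley (x + 1) hxd
      omega
    · exact dvd_rfl
    · obtain ⟨y, rfl⟩ := Nat.exists_eq_add_of_le' hxd.le
      rw [Nat.sub_add_comm (by omega), hshift, hshift] at hup
      rw [add_right_comm, hshift, hshift] at hdown
      exact (hpeak y ⟨hup, hdown⟩).add dvd_rfl

lemma exists_valley (hstep : ∀ x < d, H (x + 1) = H x + 1 ∨ H x = H (x + 1) + 1)
    (hpeak : ∀ x < d, ¬ IsPeak H x) :
    ∃ k ≤ d, ∀ x ≤ d, H x + 2 * min x k = H 0 + x := by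
  induction d with
  | zero => exact ⟨0, le_rfl, fun x hx => by simp [Nat.le_zero.1 hx]⟩
  | succ d ih =>
    obtain ⟨k, hkd, hk⟩ := ih (fun x hx => hstep x (by omega)) (fun x hx => hpeak x (by omega))
    have hd := hk d le_rfl
    -- A down step can be added only if `k = d`: after an up step it would create a peak.
    rcases hstep d d.lt_succ_self with hup | hdown
    · refine ⟨k, by omega, fun x hx => ?_⟩
      rcases hx.lt_or_eq with hx | rfl
      · exact hk x (by omega)
      · omega
    · obtain rfl : k = d := by
        by_contra hne
        have := hk (d - 1) (by omega)
        exact hpeak d d.lt_succ_self ⟨by omega, by omega⟩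
      refine ⟨k + 1, le_rfl, fun x hx => ?_⟩
      rcases hx.lt_or_eq with hx | rfl
      · have := hk x (by omega)
        omega
      · omega

lemma shift_mem (hH : H ∈ multiplePeakPaths d (m + 1) a) :
    (fun x => H (x + d)) ∈ multiplePeakPaths d m (H d) := by
  obtain ⟨hpath, hpeak⟩ := hH
  refine ⟨⟨by simp, fun x hx => hpath.eq_zero _ (by rw [add_one_mul]; omega), fun x hx => ?_⟩,
    fun x hx => ?_⟩
  · simpa only [add_right_comm] using hpath.step (x + d) (by rw [add_one_mul]; omega)
  · rcases Nat.eq_zero_or_pos x with rfl | hpos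
    · exact dvd_zero d
    · obtain ⟨y, rfl⟩ : ∃ y, x = y + 1 := ⟨x - 1, by omega⟩
      refine (Nat.dvd_add_left dvd_rfl).1 (hpeak (y + 1 + d) ?_)
      simpa only [IsPeak, add_right_comm _ _ d, add_tsub_cancel_right] using hx

lemma exists_eq_prependValley (hH : H ∈ multiplePeakPaths d (m + 1) a) :
    ∃ k ≤ min a d, (fun x => H (x + d)) ∈ multiplePeakPaths d m (a + d - 2 * k) ∧
      prependValley d a k (fun x => H (x + d)) = H := by
  have hmem := shift_mem hH
  obtain ⟨hpath, hpeak⟩ := hH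
  obtain ⟨k, hkd, hk⟩ : ∃ k ≤ d, ∀ x ≤ d, H x + 2 * min x k = H 0 + x := by
    refine exists_valley (fun x hx => hpath.step x (by rw [add_one_mul]; omega)) fun x hx h => ?_
    obtain rfl := Nat.eq_zero_of_dvd_of_lt (hpeak x h) hx
    exact h.1.false
  rw [hpath.start] at hk
  have hka := hk k hkd
  have hend := hk d le_rfl
  refine ⟨k, by omega, ?_, ?_⟩
  · rwa [show a + d - 2 * k = H d by omega]
  · funext x
    unfold prependValley
    split_ifs with hx
    · have := hk x hx.le
      omega
    · simp only
      rw [Nat.sub_add_cancel (not_lt.1 hx)]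

lemma prependValley_bijective (d m a : ℕ) : Function.Bijective
    fun p : Σ k : Fin (min a d + 1), multiplePeakPaths d m (a + d - 2 * k) =>
      (⟨prependValley d a p.1 p.2, prependValley_mem (by omega) (by omega) p.2.2⟩ :
        multiplePeakPaths d (m + 1) a) := by
  constructor
  · rintro ⟨k, H, hH⟩ ⟨k', H', hH'⟩ h
    have heq := congrFun (Subtype.ext_iff.1 h)
    obtain rfl : H = H' := funext fun x => by
      simpa only [prependValley_add] using heq (x + d)
    obtain rfl : k = k' := by
      have := hH.1.start.symm.trans hH'.1.start
      omega
    rfl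
  · rintro ⟨H, hH⟩
    obtain ⟨k, hk, hmem, heq⟩ := exists_eq_prependValley hH
    exact ⟨⟨⟨k, by omega⟩, _, hmem⟩, Subtype.ext heq⟩

lemma multiplePeakPaths_zero (d a : ℕ) : multiplePeakPaths d 0 a = if a = 0 then {0} else ∅ := by
  ext H
  split_ifs with ha
  · subst ha
    refine ⟨fun hH => funext fun x => hH.1.eq_zero x (by simp), ?_⟩
    rintro rfl
    exact ⟨⟨rfl, fun _ _ => rfl, by simp⟩, fun x hx => absurd hx.1 (lt_irrefl 0)⟩
  · simp only [Set.mem_empty_iff_false, iff_false]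
    exact fun hH => ha (hH.1.start.symm.trans (hH.1.eq_zero 0 (by simp)))

instance finite_multiplePeakPaths (d m a : ℕ) : Finite (multiplePeakPaths d m a) := by
  induction m generalizing a with
  | zero =>
    rw [multiplePeakPaths_zero]
    split_ifs <;> infer_instance
  | succ m ih => exact Finite.of_surjective _ (prependValley_bijective d m a).surjective

lemma card_multiplePeakPaths_zero (d a : ℕ) :
    Nat.card (multiplePeakPaths d 0 a) = if a = 0 then 1 else 0 := by
  rw [multiplePeakPaths_zero]
  split_ifs <;> simp

lemma card_multiplePeakPaths_succ (d m a : ℕ) :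
    Nat.card (multiplePeakPaths d (m + 1) a) =
      ∑ k ∈ range (min a d + 1), Nat.card (multiplePeakPaths d m (a + d - 2 * k)) := by
  rw [← Nat.card_congr (Equiv.ofBijective _ (prependValley_bijective d m a)), Nat.card_sigma,
    sum_range]

end Valleys

/-! ### Chebyshev polynomials and the semicircle distribution -/

section Chebyshev

open Polynomial Polynomial.Chebyshev

lemma chebyshevU_mul_U (R : Type*) [CommRing R] (a : ℤ) (d : ℕ) :
    U R d * U R a = ∑ k ∈ range (d + 1), U R (a + d - 2 * k) := by
  induction d using Nat.twoStepInduction with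
  | zero => simp
  | one =>
    have hsub : a + (1 : ℕ) - 2 * (1 : ℕ) = a - 1 := by norm_num; ring
    rw [sum_range_succ, sum_range_one, hsub, Nat.cast_zero, mul_zero, sub_zero, Nat.cast_one,
      U_add_one, U_one]
    ring
  | more d ih ih' =>
    have hrec : ∀ k : ℕ, U R (a + (d + 2 : ℕ) - 2 * k) =
        2 * X * U R (a + (d + 1 : ℕ) - 2 * k) - U R (a + d - 2 * k) := fun k => by
      have := U_add_two R (a + d - 2 * k)
      push_cast
      convert this using 2 <;> ring_nf
    rw [sum_range_succ, sum_congr rfl fun k _ => hrec k, sum_sub_distrib, ← mul_sum, ← ih',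
      sum_range_succ _ (d + 1), ← ih]
    push_cast
    rw [U_add_two]
    ring_nf

lemma chebyshevU_mul_U_natCast (R : Type*) [CommRing R] (a d : ℕ) :
    U R d * U R a = ∑ k ∈ range (min a d + 1), U R (a + d - 2 * k : ℕ) := by
  wlog had : d ≤ a generalizing a d
  · rw [mul_comm, this d a (by omega), min_comm, add_comm d a]
  rw [chebyshevU_mul_U, min_eq_right had]
  refine sum_congr rfl fun k hk => ?_
  rw [mem_range] at hk
  rw [Nat.cast_sub (by omega)]
  push_cast
  rfl

lemma card_multiplePeakPaths_eq {R : Type*} [CommRing R] {L : R[X] →ₗ[R] R}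
    (hL : ∀ n : ℕ, L (U R n) = if n = 0 then 1 else 0) (d m a : ℕ) :
    (Nat.card (multiplePeakPaths d m a) : R) = L (U R d ^ m * U R a) := by
  induction m generalizing a with
  | zero => rw [card_multiplePeakPaths_zero, pow_zero, one_mul, hL, Nat.cast_ite, Nat.cast_one,
      Nat.cast_zero]
  | succ m ih =>
    rw [card_multiplePeakPaths_succ, Nat.cast_sum, sum_congr rfl fun k _ => ih _, ← map_sum,
      ← mul_sum, ← chebyshevU_mul_U_natCast, ← mul_assoc, ← pow_succ]

/-- Integration against the semicircle distribution, in the parametrization `t = cos x`. -/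
noncomputable def semicircleIntegral : ℝ[X] →ₗ[ℝ] ℝ where
  toFun p := 2 / Real.pi * ∫ x in (0 : ℝ)..Real.pi, p.eval (Real.cos x) * Real.sin x ^ 2
  map_add' p q := by
    simp only [eval_add, add_mul]
    rw [intervalIntegral.integral_add (by apply Continuous.intervalIntegrable; fun_prop)
      (by apply Continuous.intervalIntegrable; fun_prop), mul_add]
  map_smul' c p := by
    simp only [eval_smul, smul_eq_mul, mul_assoc, intervalIntegral.integral_const_mul,
      RingHom.id_apply]
    ring

lemma semicircleIntegral_U (n : ℕ) :
    semicircleIntegral (U ℝ n) = if n = 0 then 1 else 0 := by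
  have hT : ∀ k : ℤ, Continuous fun x => (T ℝ k).eval (Real.cos x) := fun k => by fun_prop
  have hcos : ∀ x : ℝ, (U ℝ n).eval (Real.cos x) * Real.sin x ^ 2 =
      ((T ℝ n).eval (Real.cos x) - (T ℝ (n + 2)).eval (Real.cos x)) / 2 := fun x => by
    rw [Real.sin_sq]
    have h := congrArg (eval (Real.cos x)) (one_sub_X_sq_mul_U_eq_pol_in_T ℝ n)
    have h' := congrArg (eval (Real.cos x)) (T_add_two ℝ n)
    simp only [eval_mul, eval_sub, eval_one, eval_pow, eval_X, eval_ofNat] at h h'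
    linarith
  change 2 / Real.pi * (∫ x in (0 : ℝ)..Real.pi, _) = _
  simp only [hcos]
  rw [intervalIntegral.integral_div, intervalIntegral.integral_sub
    ((hT _).intervalIntegrable _ _) ((hT _).intervalIntegrable _ _),
    ← integral_measureT_eq_integral_cos (f := fun t => (T ℝ n).eval t),
    ← integral_measureT_eq_integral_cos (f := fun t => (T ℝ (n + 2)).eval t),
    integral_eval_T_real_measureT_of_ne_zero (n := n + 2) (by omega)]
  split_ifs with hn
  · subst hn
    rw [Nat.cast_zero, integral_eval_T_real_measureT_zero]
    field_simp
    simp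
  · rw [integral_eval_T_real_measureT_of_ne_zero (by exact_mod_cast hn)]
    simp

lemma semicircleIntegral_U_pow (d m : ℕ) : semicircleIntegral (U ℝ d ^ m) =
    2 / Real.pi * ∫ x in (0 : ℝ)..Real.pi,
      (Real.sin ((d + 1) * x) / Real.sin x) ^ m * Real.sin x ^ 2 := by
  change 2 / Real.pi * (∫ x in (0 : ℝ)..Real.pi, _) = _
  congr 2 with x
  by_cases hx : Real.sin x = 0
  · simp [hx]
  · rw [eval_pow, eq_div_of_mul_eq hx (U_real_cos x d), Int.cast_natCast]

end Chebyshev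

/-- The number of `m`-partite noncrossing pair partitions of `{1, ..., md}`
(with respect to the consecutive intervals of length `d`) equals
`(2/π) ∫₀^π (sin((d+1)x)/sin x)^m · sin²x dx`. -/
theorem card_noncrossing_eq_integral (m d : ℕ) (hd : 1 ≤ d) :
    (Nat.card {π : Finpartition (Finset.univ : Finset (Fin (m * d))) //
        IsNoncrossing π ∧ IsPairPartition π ∧ IsMPartite d π} : ℝ) =
      (2 / Real.pi) * ∫ x in (0:ℝ)..Real.pi,
        (Real.sin (((d : ℝ) + 1) * x) / Real.sin x) ^ m * Real.sin x ^ 2 := by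
  calc
    _ = (Nat.card (multiplePeakPaths d m 0) : ℝ) := by
      rw [card_partitions_eq_card_multiplePeakPaths]
    _ = semicircleIntegral (Polynomial.Chebyshev.U ℝ d ^ m) := by
      simpa using card_multiplePeakPaths_eq semicircleIntegral_U d m 0
    _ = _ := semicircleIntegral_U_pow d m
end
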